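/- arXiv:1806.04553 — 4 statements merged into one kernel-verified Lean document; each statement's English description precedes it below -/
import Mathlib

section
/- For positive semidefinite operators ρ and σ with the support of ρ contained in the support of σ, and for α > 1 with β = α − 1, the Araki–Lieb–Thirring inequality implies that the Petz Rényi power tr(ρ^α σ^{−β}) is at least the sandwiched Rényi power tr((σ^{−β/(2α)} ρ σ^{−β/(2α)})^α). -/
open scoped Matrix BigOperators Classical ComplexOrder

noncomputable section

/-- Real part of the trace of a complex matrix. -/
def rtr {d : ℕ} (M : Matrix (Fin d) (Fin d) ℂ) : ℝ := (Matrix.trace M).re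

/-- Functional calculus applied to a matrix (junk value `0` if the matrix is not Hermitian). -/
def mfun {d : ℕ} (f : ℝ → ℝ) (A : Matrix (Fin d) (Fin d) ℂ) : Matrix (Fin d) (Fin d) ℂ :=
  if h : A.IsHermitian then h.cfc f else 0

/-- Positive part `[A]₊` of a Hermitian matrix. -/
def posPartM {d : ℕ} (A : Matrix (Fin d) (Fin d) ℂ) : Matrix (Fin d) (Fin d) ℂ :=
  mfun (fun x => max x 0) A

/-- Projector onto the support of the positive part of a Hermitian matrix. -/
def posSuppProj {d : ℕ} (A : Matrix (Fin d) (Fin d) ℂ) : Matrix (Fin d) (Fin d) ℂ :=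
  mfun (fun x => if 0 < x then 1 else 0) A

/-- Operator absolute value of a Hermitian matrix. -/
def absM {d : ℕ} (A : Matrix (Fin d) (Fin d) ℂ) : Matrix (Fin d) (Fin d) ℂ :=
  mfun (fun x => |x|) A

/-- Moore–Penrose (relative) power of a Hermitian matrix: `x ↦ x ^ p` on the support,
`0` on the kernel. -/
def mpow {d : ℕ} (A : Matrix (Fin d) (Fin d) ℂ) (p : ℝ) : Matrix (Fin d) (Fin d) ℂ :=
  mfun (fun x => if x = 0 then 0 else x ^ p) A

/-- Support containment: the kernel of `σ` is contained in the kernel of `ρ`,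
i.e. `supp ρ ⊆ supp σ` for positive semidefinite matrices. -/
def suppSubset {d : ℕ} (ρ σ : Matrix (Fin d) (Fin d) ℂ) : Prop :=
  ∀ v : Fin d → ℂ, σ.mulVec v = 0 → ρ.mulVec v = 0

/-- Sandwiched Rényi power `R_α(ρ|σ) = tr((σ^{-β/(2α)} ρ σ^{-β/(2α)})^α)`, `β = α - 1`. -/
def sandR {d : ℕ} (α : ℝ) (ρ σ : Matrix (Fin d) (Fin d) ℂ) : ℝ :=
  rtr (mpow (mpow σ (-(α - 1) / (2 * α)) * ρ * mpow σ (-(α - 1) / (2 * α))) α)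

/-- Petz Rényi power `tr(ρ^α σ^{-β})`, `β = α - 1`. -/
def petzR {d : ℕ} (α : ℝ) (ρ σ : Matrix (Fin d) (Fin d) ℂ) : ℝ :=
  rtr (mpow ρ α * mpow σ (-(α - 1)))



/-- Complex power on the support. -/
def cpw (z : ℂ) (x : ℝ) : ℂ := if x = 0 then 0 else Complex.exp (z * (Real.log x : ℂ))

/-- Complex power (on the support) of a Hermitian matrix. -/
def cp {d : ℕ} {A : Matrix (Fin d) (Fin d) ℂ} (hA : A.IsHermitian) (z : ℂ) :
    Matrix (Fin d) (Fin d) ℂ :=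
  Unitary.conjStarAlgAut ℂ _ hA.eigenvectorUnitary
    (Matrix.diagonal (fun i => cpw z (hA.eigenvalues i)))

theorem cpw_mul (z w : ℂ) (x : ℝ) : cpw z x * cpw w x = cpw (z + w) x := by
  unfold cpw
  split_ifs
  · simp
  · rw [← Complex.exp_add, add_mul]

theorem cpw_star (z : ℂ) (x : ℝ) : star (cpw z x) = cpw (star z) x := by
  unfold cpw
  split_ifs
  · simp
  · simp [← Complex.exp_conj]

theorem cp_mul {d : ℕ} {A : Matrix (Fin d) (Fin d) ℂ} (hA : A.IsHermitian) (z w : ℂ) :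
    cp hA z * cp hA w = cp hA (z + w) := by
  unfold cp
  rw [← map_mul, Matrix.diagonal_mul_diagonal]
  simp only [cpw_mul]

theorem cp_star {d : ℕ} {A : Matrix (Fin d) (Fin d) ℂ} (hA : A.IsHermitian) (z : ℂ) :
    (cp hA z)ᴴ = cp hA (star z) := by
  unfold cp
  rw [← Matrix.star_eq_conjTranspose, ← map_star, Matrix.star_eq_conjTranspose,
    Matrix.diagonal_conjTranspose]
  congr 2
  funext i
  exact cpw_star _ _

theorem mpow_eq {d : ℕ} {A : Matrix (Fin d) (Fin d) ℂ} (hA : A.PosSemidef) (p : ℝ) :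
    mpow A p = cp hA.1 (p : ℂ) := by
  unfold mpow mfun cp
  rw [dif_pos hA.1, Matrix.IsHermitian.cfc]
  congr 2
  funext i
  simp only [Function.comp, cpw]
  have h0 := hA.eigenvalues_nonneg i
  split_ifs with h
  · simp
  · rw [Real.rpow_def_of_pos (lt_of_le_of_ne h0 (Ne.symm h))]
    simp [mul_comm]

theorem cp_one {d : ℕ} {A : Matrix (Fin d) (Fin d) ℂ} (hA : A.PosSemidef) :
    cp hA.1 1 = A := by
  conv_rhs => rw [hA.1.spectral_theorem]
  unfold cp
  congr 2
  funext i
  simp only [Function.comp, cpw]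
  have h0 := hA.eigenvalues_nonneg i
  split_ifs with h
  · simp [h]
  · rw [one_mul, ← Complex.ofReal_exp, Real.exp_log (lt_of_le_of_ne h0 (Ne.symm h))]
    rfl

/-- Squared Hilbert-Schmidt norm. -/
def hs {d : ℕ} (M : Matrix (Fin d) (Fin d) ℂ) : ℝ := ∑ i, ∑ j, ‖M i j‖ ^ 2

theorem hs_nonneg {d : ℕ} (M : Matrix (Fin d) (Fin d) ℂ) : 0 ≤ hs M := by
  unfold hs; positivity

theorem hs_star {d : ℕ} (M : Matrix (Fin d) (Fin d) ℂ) : hs Mᴴ = hs M := by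
  unfold hs
  rw [Finset.sum_comm]
  simp [Matrix.conjTranspose_apply]

theorem hs_eq {d : ℕ} (M : Matrix (Fin d) (Fin d) ℂ) : hs M = rtr (Mᴴ * M) := by
  unfold hs rtr
  rw [Finset.sum_comm]
  simp only [Matrix.trace, Matrix.diag, Matrix.mul_apply, Complex.re_sum,
    Matrix.conjTranspose_apply]
  refine Finset.sum_congr rfl fun i _ => Finset.sum_congr rfl fun j _ => ?_
  rw [← Complex.normSq_eq_norm_sq, Complex.star_def, ← Complex.normSq_eq_conj_mul_self]
  simp

theorem norm_trace_le {d : ℕ} (M N : Matrix (Fin d) (Fin d) ℂ) (a : ℝ)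
    (hM : hs M ≤ a) (hN : hs N ≤ a) : ‖Matrix.trace (M * N)‖ ≤ a := by
  have key : ‖Matrix.trace (M * N)‖ ≤ (hs M + hs N) / 2 := by
    have e : (hs M + hs N) / 2 = ∑ i, ∑ j, (‖M i j‖ ^ 2 + ‖N j i‖ ^ 2) / 2 := by
      have : hs N = ∑ i, ∑ j, ‖N j i‖ ^ 2 := by unfold hs; rw [Finset.sum_comm]
      rw [this]; unfold hs
      simp only [← Finset.sum_div, ← Finset.sum_add_distrib]
    rw [e]
    simp only [Matrix.trace, Matrix.diag, Matrix.mul_apply]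
    refine (norm_sum_le _ _).trans (Finset.sum_le_sum fun i _ => ?_)
    refine (norm_sum_le _ _).trans (Finset.sum_le_sum fun j _ => ?_)
    rw [norm_mul]
    nlinarith [sq_nonneg (‖M i j‖ - ‖N j i‖)]
  linarith

theorem hs_contract {d : ℕ} {A : Matrix (Fin d) (Fin d) ℂ} (hA : A.IsHermitian) (z : ℂ)
    (hz : z.re = 0) (B : Matrix (Fin d) (Fin d) ℂ) : hs (cp hA z * B) ≤ hs B := by
  have e : star z + z = 0 := by
    apply Complex.ext <;> simp [hz]
  have h1 : hs (cp hA z * B) = rtr (Bᴴ * (cp hA 0 * B)) := by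
    rw [hs_eq, Matrix.conjTranspose_mul, cp_star, Matrix.mul_assoc, ← Matrix.mul_assoc (cp hA _),
      cp_mul, e]
  have h2 : hs ((1 - cp hA 0) * B) = rtr (Bᴴ * B) - rtr (Bᴴ * (cp hA 0 * B)) := by
    have hp : cp hA 0 * cp hA 0 = cp hA 0 := by rw [cp_mul, add_zero]
    have hq : (1 - cp hA 0) * (1 - cp hA 0) = 1 - cp hA 0 := by
      rw [mul_sub, sub_mul, sub_mul, hp]; simp
    rw [hs_eq, Matrix.conjTranspose_mul, Matrix.conjTranspose_sub, cp_star,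
      Matrix.conjTranspose_one, star_zero, Matrix.mul_assoc, ← Matrix.mul_assoc (1 - cp hA 0),
      hq, sub_mul, one_mul, mul_sub]
    simp [rtr, Matrix.trace_sub]
  have h3 := hs_nonneg ((1 - cp hA 0) * B)
  rw [h1, hs_eq B]
  linarith

theorem hs_contract_right {d : ℕ} {A : Matrix (Fin d) (Fin d) ℂ} (hA : A.IsHermitian) (z : ℂ)
    (hz : z.re = 0) (B : Matrix (Fin d) (Fin d) ℂ) : hs (B * cp hA z) ≤ hs B := by
  rw [← hs_star, Matrix.conjTranspose_mul, cp_star, ← hs_star B]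
  exact hs_contract hA _ (by simpa using hz) _

/-- Entire functions bounded on the unit strip. -/
def Good (f : ℂ → ℂ) : Prop :=
  Differentiable ℂ f ∧ ∃ C : ℝ, ∀ z : ℂ, 0 ≤ z.re → z.re ≤ 1 → ‖f z‖ ≤ C

theorem Good.const (c : ℂ) : Good (fun _ => c) :=
  ⟨differentiable_const _, ‖c‖, fun _ _ _ => le_rfl⟩

theorem Good.mul {f g : ℂ → ℂ} (hf : Good f) (hg : Good g) : Good (fun z => f z * g z) := by
  obtain ⟨hf, C, hC⟩ := hf
  obtain ⟨hg, D, hD⟩ := hg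
  refine ⟨hf.mul hg, C * D, fun z h0 h1 => ?_⟩
  rw [norm_mul]
  exact mul_le_mul (hC z h0 h1) (hD z h0 h1) (norm_nonneg _) ((norm_nonneg _).trans (hC z h0 h1))

theorem Good.sum {d : ℕ} {f : Fin d → ℂ → ℂ} (hf : ∀ i, Good (f i)) :
    Good (fun z => ∑ i, f i z) := by
  choose hd C hC using hf
  refine ⟨by fun_prop, ∑ i, C i, fun z h0 h1 => ?_⟩
  exact (norm_sum_le _ _).trans (Finset.sum_le_sum fun i _ => hC i z h0 h1)

theorem Good.cpw (a b x : ℝ) : Good (fun z => cpw ((a : ℂ) + b * z) x) := by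
  by_cases hx : x = 0
  · simpa [_root_.cpw, hx] using Good.const 0
  · simp only [_root_.cpw, hx, if_false]
    refine ⟨by fun_prop, Real.exp ((|a| + |b|) * |Real.log x|), fun z h0 h1 => ?_⟩
    rw [Complex.norm_exp]
    apply Real.exp_le_exp.mpr
    have : ((((a : ℂ) + b * z) * (Real.log x : ℂ))).re = (a + b * z.re) * Real.log x := by simp
    rw [this]
    refine (le_abs_self _).trans ?_
    rw [abs_mul]
    gcongr
    refine (abs_add_le _ _).trans ?_
    rw [abs_mul, abs_of_nonneg h0]
    nlinarith [abs_nonneg b]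

theorem Good.mat_mul {d : ℕ} {F G : ℂ → Matrix (Fin d) (Fin d) ℂ}
    (hF : ∀ i j, Good (fun z => F z i j)) (hG : ∀ i j, Good (fun z => G z i j)) :
    ∀ i j, Good (fun z => (F z * G z) i j) := by
  intro i j
  simp only [Matrix.mul_apply]
  exact Good.sum fun k => (hF i k).mul (hG k j)

theorem Good.cp {d : ℕ} {A : Matrix (Fin d) (Fin d) ℂ} (hA : A.IsHermitian) (a b : ℝ) :
    ∀ i j, Good (fun z => cp hA ((a : ℂ) + b * z) i j) := by
  unfold _root_.cp
  simp only [Unitary.conjStarAlgAut_apply]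
  refine Good.mat_mul (Good.mat_mul (fun i j => Good.const _) ?_) (fun i j => Good.const _)
  intro i j
  by_cases h : i = j
  · subst h
    simpa using Good.cpw a b _
  · simpa [Matrix.diagonal_apply_ne _ h] using Good.const 0

theorem rtr_comm {d : ℕ} (M N : Matrix (Fin d) (Fin d) ℂ) : rtr (M * N) = rtr (N * M) := by
  unfold rtr; rw [Matrix.trace_mul_comm]

theorem hs_cp {d : ℕ} {A : Matrix (Fin d) (Fin d) ℂ} (hA : A.IsHermitian) (z : ℂ) :
    hs (cp hA z) = rtr (cp hA ((2 * z.re : ℝ) : ℂ)) := by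
  rw [hs_eq, cp_star, cp_mul]
  congr 2
  apply Complex.ext <;> simp [two_mul]

theorem hs_cp_cp {d : ℕ} {A B : Matrix (Fin d) (Fin d) ℂ} (hA : A.IsHermitian)
    (hB : B.IsHermitian) (z w : ℂ) :
    hs (cp hA z * cp hB w) = rtr (cp hA ((2 * z.re : ℝ) : ℂ) * cp hB ((2 * w.re : ℝ) : ℂ)) := by
  have e : ∀ z : ℂ, star z + z = ((2 * z.re : ℝ) : ℂ) := by
    intro z; apply Complex.ext <;> simp [two_mul]
  rw [hs_eq, Matrix.conjTranspose_mul, cp_star, cp_star, Matrix.mul_assoc, rtr_comm,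
    Matrix.mul_assoc, Matrix.mul_assoc, cp_mul, ← Matrix.mul_assoc, cp_mul, e, add_comm w, e]

theorem stmt5 {d : ℕ} (ρ σ : Matrix (Fin d) (Fin d) ℂ)
    (hρ : ρ.PosSemidef) (hσ : σ.PosSemidef) (hsupp : suppSubset ρ σ)
    (α : ℝ) (hα : 1 < α) :
    sandR α ρ σ ≤ petzR α ρ σ := by
  have hα0 : α ≠ 0 := by positivity
  set q : ℝ := -(α - 1) / (2 * α) with hq
  set X := mpow σ q * ρ * mpow σ q with hXdef
  have hX : X.PosSemidef := by
    have h := hρ.mul_mul_conjTranspose_same (mpow σ q)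
    have e : (mpow σ q)ᴴ = mpow σ q := by
      rw [mpow_eq hσ, cp_star]; simp
    rwa [e] at h
  set T := sandR α ρ σ with hT
  set P := petzR α ρ σ with hP
  have hT' : T = rtr (cp hX.1 (α : ℂ)) := by
    rw [hT, sandR, ← mpow_eq hX]
  have hP' : P = rtr (cp hρ.1 (α : ℂ) * cp hσ.1 ((-(α - 1) : ℝ) : ℂ)) := by
    rw [hP, petzR, mpow_eq hρ, mpow_eq hσ]
  have hT0 : 0 ≤ T := by
    have h := hs_nonneg (cp hX.1 ((α / 2 : ℝ) : ℂ))
    rw [hs_cp, Complex.ofReal_re, mul_div_cancel₀ _ two_ne_zero] at h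
    rwa [hT']
  have hPhs : ∀ z w : ℂ, z.re = α / 2 → w.re = -(α - 1) / 2 →
      hs (cp hρ.1 z * cp hσ.1 w) = P := by
    intro z w hz hw
    rw [hs_cp_cp, hz, hw, hP']
    congr 4 <;> push_cast <;> ring
  have hP0 : 0 ≤ P := by
    rw [← hPhs ((α / 2 : ℝ) : ℂ) ((-(α - 1) / 2 : ℝ) : ℂ) (Complex.ofReal_re _)
      (Complex.ofReal_re _)]
    exact hs_nonneg _
  have hThs : ∀ z : ℂ, z.re = α / 2 → hs (cp hX.1 z) = T := by
    intro z hz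
    rw [hs_cp, hz, hT', mul_div_cancel₀ _ two_ne_zero]
  let G : ℂ → Matrix (Fin d) (Fin d) ℂ := fun z =>
    cp hρ.1 ((α : ℝ) + (-α : ℝ) * z) *
      cp hσ.1 (((-(α - 1) / 2 : ℝ) : ℂ) + ((α - 1) / 2 : ℝ) * z) *
      cp hX.1 ((0 : ℝ) + (α : ℝ) * z) *
      cp hσ.1 (((-(α - 1) / 2 : ℝ) : ℂ) + ((α - 1) / 2 : ℝ) * z)
  have hG : ∀ i j, Good (fun z => G z i j) :=
    Good.mat_mul (Good.mat_mul (Good.mat_mul (Good.cp _ _ _) (Good.cp _ _ _)) (Good.cp _ _ _))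
      (Good.cp _ _ _)
  have hF : Good (fun z => Matrix.trace (G z)) := by
    simp only [Matrix.trace, Matrix.diag]
    exact Good.sum fun i => hG i i
  obtain ⟨hFd, C, hC⟩ := hF
  have h0 : ∀ z ∈ Complex.re ⁻¹' {(0 : ℝ)}, ‖Matrix.trace (G z)‖ ≤ P := by
    intro z hz
    have hz : z.re = 0 := hz
    have e : (α : ℝ) + (-α : ℝ) * z = ((α / 2 : ℝ) : ℂ) + (((α / 2 : ℝ) : ℂ) + (-α : ℝ) * z) := by
      push_cast; ring
    have : Matrix.trace (G z) = Matrix.trace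
        ((cp hρ.1 (((α / 2 : ℝ) : ℂ) + (-α : ℝ) * z) *
          cp hσ.1 (((-(α - 1) / 2 : ℝ) : ℂ) + ((α - 1) / 2 : ℝ) * z) *
          cp hX.1 ((0 : ℝ) + (α : ℝ) * z)) *
        (cp hσ.1 (((-(α - 1) / 2 : ℝ) : ℂ) + ((α - 1) / 2 : ℝ) * z) *
          cp hρ.1 ((α / 2 : ℝ) : ℂ))) := by
      simp only [G]
      rw [e, ← cp_mul, Matrix.mul_assoc (cp hρ.1 _), Matrix.mul_assoc (cp hρ.1 _),
        Matrix.mul_assoc (cp hρ.1 _), Matrix.trace_mul_comm]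
      simp only [Matrix.mul_assoc]
    rw [this]
    apply norm_trace_le
    · refine (hs_contract_right _ _ (by simp [hz]) _).trans (le_of_eq ?_)
      exact hPhs _ _ (by simp [hz]) (by simp [hz])
    · rw [← hs_star, Matrix.conjTranspose_mul, cp_star, cp_star]
      exact le_of_eq (hPhs _ _ (by simp) (by simp [hz]))
  have h1 : ∀ z ∈ Complex.re ⁻¹' {(1 : ℝ)}, ‖Matrix.trace (G z)‖ ≤ T := by
    intro z hz
    have hz : z.re = 1 := hz
    have e : (0 : ℝ) + (α : ℝ) * z = ((α / 2 : ℝ) : ℂ) + (((-α / 2 : ℝ) : ℂ) + (α : ℝ) * z) := by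
      push_cast; ring
    have : Matrix.trace (G z) = Matrix.trace
        ((cp hρ.1 ((α : ℝ) + (-α : ℝ) * z) *
          (cp hσ.1 (((-(α - 1) / 2 : ℝ) : ℂ) + ((α - 1) / 2 : ℝ) * z) *
          cp hX.1 ((α / 2 : ℝ) : ℂ))) *
        (cp hX.1 (((-α / 2 : ℝ) : ℂ) + (α : ℝ) * z) *
          cp hσ.1 (((-(α - 1) / 2 : ℝ) : ℂ) + ((α - 1) / 2 : ℝ) * z))) := by
      simp only [G]
      rw [e, ← cp_mul hX.1]
      simp only [Matrix.mul_assoc]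
    rw [this]
    apply norm_trace_le
    · refine (hs_contract _ _ (by simp [hz]) _).trans
        ((hs_contract _ _ (by simp [hz]; ring) _).trans (le_of_eq ?_))
      exact hThs _ (by simp)
    · refine (hs_contract_right _ _ (by simp [hz]; ring) _).trans (le_of_eq ?_)
      exact hThs _ (by simp [hz]; ring)
  have hs0 : 0 ≤ 1 - 1 / α := by
    rw [sub_nonneg, div_le_one (by positivity)]; exact hα.le
  have hs1 : 1 - 1 / α ≤ 1 := by
    have : 0 ≤ 1 / α := by positivity
    linarith
  have key := Complex.HadamardThreeLines.norm_le_interp_of_mem_verticalClosedStrip'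
    (f := fun z => Matrix.trace (G z)) (z := ((1 - 1 / α : ℝ) : ℂ)) (a := P) (b := T)
    (l := 0) (u := 1) one_pos (by
      simp only [Complex.HadamardThreeLines.verticalClosedStrip, Set.mem_preimage,
        Complex.ofReal_re]
      exact ⟨hs0, hs1⟩) hFd.diffContOnCl (by
      refine ⟨C, ?_⟩
      rintro _ ⟨z, hz, rfl⟩
      exact hC z hz.1 hz.2) h0 h1
  have hval : Matrix.trace (G ((1 - 1 / α : ℝ) : ℂ)) = Matrix.trace (cp hX.1 (α : ℂ)) := by
    have hαc : (α : ℂ) ≠ 0 := by exact_mod_cast hα0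
    have e1 : (α : ℝ) + (-α : ℝ) * ((1 - 1 / α : ℝ) : ℂ) = (1 : ℂ) := by
      push_cast; field_simp; ring
    have e2 : ((-(α - 1) / 2 : ℝ) : ℂ) + ((α - 1) / 2 : ℝ) * ((1 - 1 / α : ℝ) : ℂ) = (q : ℂ) := by
      rw [hq]; push_cast; field_simp; ring
    have e3 : (0 : ℝ) + (α : ℝ) * ((1 - 1 / α : ℝ) : ℂ) = ((α : ℂ) - 1) := by
      push_cast; field_simp; ring
    simp only [G]
    rw [e1, e2, e3, cp_one hρ, ← mpow_eq hσ, Matrix.trace_mul_comm, ← Matrix.mul_assoc,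
      ← Matrix.mul_assoc]
    have : cp hX.1 (α : ℂ) = X * cp hX.1 ((α : ℂ) - 1) := by
      have h := cp_mul hX.1 1 ((α : ℂ) - 1)
      rw [cp_one hX, add_sub_cancel] at h
      exact h.symm
    rw [this]
  simp only [Complex.ofReal_re, sub_zero, div_one, sub_sub_cancel] at key
  have hle : T ≤ P ^ (1 / α) * T ^ (1 - 1 / α) := by
    refine le_trans ?_ key
    rw [hval, hT']
    exact Complex.re_le_norm _
  rcases hT0.eq_or_lt with h | h
  · rw [← h]; exact hP0
  · have hsplit : T = T ^ (1 / α) * T ^ (1 - 1 / α) := by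
      rw [← Real.rpow_add h]; simp
    have hpos : 0 < T ^ (1 - 1 / α) := Real.rpow_pos_of_pos h _
    have h2 : T ^ (1 / α) ≤ P ^ (1 / α) := by
      by_contra hcon
      push Not at hcon
      have := mul_lt_mul_of_pos_right hcon hpos
      rw [← hsplit] at this
      linarith
    exact (Real.rpow_le_rpow_iff hT0 hP0 (by positivity)).mp h2
end
end

section
/- For positive semidefinite operators 0 ≤ ρ ≤ σ ≤ σ' on a finite-dimensional Hilbert space (with supp(ρ) ⊆ supp(σ)), and α > 1 with β = α − 1, the sandwiched Rényi power is dominance-monotone in the conditioner: tr((σ'^{−β/(2α)} ρ σ'^{−β/(2α)})^α) ≤ tr((σ^{−β/(2α)} ρ σ^{−β/(2α)})^α). -/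
open scoped Matrix BigOperators Classical ComplexOrder

noncomputable section

open Matrix in
lemma mfun_eq {d : ℕ} (f : ℝ → ℝ) {A : Matrix (Fin d) (Fin d) ℂ} (h : A.IsHermitian) :
    mfun f A = (h.eigenvectorUnitary : Matrix (Fin d) (Fin d) ℂ) *
      diagonal (fun i => ((f (h.eigenvalues i) : ℝ) : ℂ)) *
      star (h.eigenvectorUnitary : Matrix (Fin d) (Fin d) ℂ) := by
  rw [mfun, dif_pos h, Matrix.IsHermitian.cfc, Unitary.conjStarAlgAut_apply]
  rfl

open Matrix in
lemma mfun_mul {d : ℕ} (f g : ℝ → ℝ) {A : Matrix (Fin d) (Fin d) ℂ} (h : A.IsHermitian) :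
    mfun f A * mfun g A = mfun (fun x => f x * g x) A := by
  rw [mfun_eq f h, mfun_eq g h, mfun_eq _ h]
  set U : Matrix (Fin d) (Fin d) ℂ := (h.eigenvectorUnitary : Matrix (Fin d) (Fin d) ℂ)
  have hU : star U * U = 1 := Unitary.coe_star_mul_self _
  have : ∀ X Y : Matrix (Fin d) (Fin d) ℂ, U * X * star U * (U * Y * star U)
      = U * (X * Y) * star U := by
    intro X Y
    calc _ = U * X * (star U * U) * Y * star U := by simp only [mul_assoc]
      _ = _ := by rw [hU]; simp only [mul_assoc, one_mul]
  rw [this, diagonal_mul_diagonal]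
  simp

lemma mfun_id {d : ℕ} {A : Matrix (Fin d) (Fin d) ℂ} (h : A.IsHermitian) :
    mfun (fun x => x) A = A := by
  rw [mfun, dif_pos h]
  exact h.spectral_theorem.symm

lemma mfun_congr {d : ℕ} {f g : ℝ → ℝ} {A : Matrix (Fin d) (Fin d) ℂ} (h : A.IsHermitian)
    (hfg : ∀ i, f (h.eigenvalues i) = g (h.eigenvalues i)) : mfun f A = mfun g A := by
  rw [mfun_eq f h, mfun_eq g h]
  simp only [hfg]

lemma mfun_herm {d : ℕ} (f : ℝ → ℝ) {A : Matrix (Fin d) (Fin d) ℂ} (h : A.IsHermitian) :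
    (mfun f A).IsHermitian := by
  rw [mfun_eq f h, Matrix.IsHermitian, Matrix.star_eq_conjTranspose]
  simp only [Matrix.conjTranspose_mul, Matrix.conjTranspose_conjTranspose,
    Matrix.diagonal_conjTranspose, mul_assoc]
  congr 3
  ext i
  simp

lemma rtr_mfun {d : ℕ} (f : ℝ → ℝ) {A : Matrix (Fin d) (Fin d) ℂ} (h : A.IsHermitian) :
    rtr (mfun f A) = ∑ i, f (h.eigenvalues i) := by
  rw [mfun_eq f h, rtr, Matrix.trace_mul_comm, ← mul_assoc, Unitary.coe_star_mul_self, one_mul,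
    Matrix.trace_diagonal]
  simp

lemma trace_mono_aux {d : ℕ} {C D U V : Matrix (Fin d) (Fin d) ℂ} {l m : Fin d → ℝ}
    (hU : star U * U = 1) (hU' : U * star U = 1) (hV : star V * V = 1) (hV' : V * star V = 1)
    (eC : C = U * Matrix.diagonal (fun i => ((l i : ℝ) : ℂ)) * star U)
    (eD : D = V * Matrix.diagonal (fun i => ((m i : ℝ) : ℂ)) * star V)
    (hl0 : ∀ i, 0 ≤ l i) (hm0 : ∀ i, 0 ≤ m i)
    (hCD : (D - C).PosSemidef) {α : ℝ} (hα : 1 < α) :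
    ∑ i, l i ^ α ≤ ∑ i, m i ^ α := by
  set W := star U * V with hW
  have hW1 : W * star W = 1 := by
    rw [hW, star_mul, star_star]
    calc _ = star U * (V * star V) * U := by simp only [mul_assoc]
      _ = 1 := by rw [hV', mul_one, hU]
  have hW2 : star W * W = 1 := by
    rw [hW, star_mul, star_star]
    calc _ = star V * (U * star U) * V := by simp only [mul_assoc]
      _ = 1 := by rw [hU', mul_one, hV]
  have row : ∀ i, ∑ j, Complex.normSq (W i j) = 1 := by
    intro i
    have := congrFun (congrFun hW1 i) i
    rw [Matrix.mul_apply] at this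
    simp only [Matrix.star_apply, Matrix.one_apply_eq, Complex.star_def,
      Complex.mul_conj] at this
    exact_mod_cast this
  have col : ∀ j, ∑ i, Complex.normSq (W i j) = 1 := by
    intro j
    have := congrFun (congrFun hW2 j) j
    rw [Matrix.mul_apply] at this
    simp only [Matrix.star_apply, Matrix.one_apply_eq, Complex.star_def,
      ← Complex.normSq_eq_conj_mul_self] at this
    exact_mod_cast this
  have key : ∀ i, l i ≤ ∑ j, Complex.normSq (W i j) * m j := by
    intro i
    have h1 : (star U * (D - C) * U).PosSemidef := hCD.conjTranspose_mul_mul_same U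
    have h2 : star U * (D - C) * U = W * Matrix.diagonal (fun i => ((m i : ℝ) : ℂ)) * star W
        - Matrix.diagonal (fun i => ((l i : ℝ) : ℂ)) := by
      rw [mul_sub, sub_mul]
      congr 1
      · conv_lhs => rw [eD]
        rw [hW, star_mul, star_star]
        simp only [mul_assoc]
      · conv_lhs => rw [eC]
        calc _ = (star U * U) * Matrix.diagonal (fun i => ((l i : ℝ) : ℂ)) * (star U * U) := by
              simp only [mul_assoc]
          _ = _ := by rw [hU, one_mul, mul_one]
    have h3 := h1.diag_nonneg (i := i)
    rw [h2, Matrix.sub_apply, Matrix.diagonal_apply_eq, Matrix.mul_apply] at h3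
    simp only [Matrix.mul_diagonal, Matrix.star_apply, Complex.star_def] at h3
    have h4 : ∑ j, W i j * ((m j : ℝ) : ℂ) * (starRingEnd ℂ) (W i j)
        = ((∑ j, Complex.normSq (W i j) * m j : ℝ) : ℂ) := by
      push_cast
      refine Finset.sum_congr rfl fun j _ => ?_
      rw [mul_right_comm, Complex.mul_conj]
    rw [h4, sub_nonneg] at h3
    exact_mod_cast h3
  calc ∑ i, l i ^ α ≤ ∑ i, (∑ j, Complex.normSq (W i j) * m j) ^ α :=
        Finset.sum_le_sum fun i _ => Real.rpow_le_rpow (hl0 i) (key i) (by linarith)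
    _ ≤ ∑ i, ∑ j, Complex.normSq (W i j) * m j ^ α := by
        refine Finset.sum_le_sum fun i _ => ?_
        have := (convexOn_rpow hα.le).map_sum_le (t := Finset.univ)
          (w := fun j => Complex.normSq (W i j)) (p := m)
          (fun j _ => Complex.normSq_nonneg _) (row i) (fun j _ => hm0 j)
        simpa only [smul_eq_mul] using this
    _ = ∑ j, m j ^ α := by
        rw [Finset.sum_comm]
        refine Finset.sum_congr rfl fun j _ => ?_
        rw [← Finset.sum_mul, col, one_mul]

/-- Monotonicity of the trace function `C ↦ tr (C ^ α)`. -/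
lemma trace_mono {d : ℕ} {C D : Matrix (Fin d) (Fin d) ℂ} (hC : C.PosSemidef)
    (hD : D.PosSemidef) (hCD : (D - C).PosSemidef) {α : ℝ} (hα : 1 < α) :
    ∑ i, hC.1.eigenvalues i ^ α ≤ ∑ i, hD.1.eigenvalues i ^ α :=
  trace_mono_aux
    (U := (hC.1.eigenvectorUnitary : Matrix (Fin d) (Fin d) ℂ))
    (V := (hD.1.eigenvectorUnitary : Matrix (Fin d) (Fin d) ℂ))
    (Unitary.coe_star_mul_self _) (Unitary.coe_mul_star_self _)
    (Unitary.coe_star_mul_self _) (Unitary.coe_mul_star_self _)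
    ((mfun_id hC.1).symm.trans (mfun_eq _ hC.1)) ((mfun_id hD.1).symm.trans (mfun_eq _ hD.1))
    hC.eigenvalues_nonneg hD.eigenvalues_nonneg hCD hα

section
open scoped MatrixOrder Matrix.Norms.L2Operator

/-- Operator monotonicity of `x ↦ x ^ s`, `0 < s < 1`, in terms of `mpow`. -/
lemma mpow_mono {d : ℕ} {A B : Matrix (Fin d) (Fin d) ℂ} (hA : A.PosSemidef)
    (hB : B.PosSemidef) (hAB : (B - A).PosSemidef) {s : ℝ} (h0 : 0 < s) (h1 : s ≤ 1) :
    (mpow B s - mpow A s).PosSemidef := by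
  have e : ∀ {X : Matrix (Fin d) (Fin d) ℂ}, X.PosSemidef → X ^ s = mpow X s := by
    intro X hX
    rw [CFC.rpow_eq_cfc_real hX.nonneg, hX.1.cfc_eq, mpow, mfun, dif_pos hX.1]
    congr 1
    ext x
    split_ifs with hx
    · rw [hx, Real.zero_rpow h0.ne']
    · rfl
  have := CFC.rpow_le_rpow (p := s) ⟨h0.le, h1⟩ (Matrix.le_iff.mpr hAB)
  rw [e hA, e hB] at this
  exact Matrix.le_iff.mp this

lemma exists_factor {d : ℕ} {A : Matrix (Fin d) (Fin d) ℂ} (hA : A.PosSemidef) :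
    ∃ B : Matrix (Fin d) (Fin d) ℂ, A = B.conjTranspose * B :=
  CStarAlgebra.nonneg_iff_eq_star_mul_self.mp hA.nonneg

end

lemma mpow_herm {d : ℕ} {A : Matrix (Fin d) (Fin d) ℂ} (hA : A.PosSemidef) (p : ℝ) :
    (mpow A p).conjTranspose = mpow A p := mfun_herm _ hA.1

lemma mpow_mul {d : ℕ} {A : Matrix (Fin d) (Fin d) ℂ} (hA : A.PosSemidef) (p q : ℝ) :
    mpow A p * mpow A q = mpow A (p + q) := by
  rw [mpow, mpow, mfun_mul _ _ hA.1, mpow]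
  refine mfun_congr hA.1 fun i => ?_
  have := hA.eigenvalues_nonneg i
  by_cases hx : hA.1.eigenvalues i = 0
  · simp [hx]
  · simp only [hx, if_false]
    rw [Real.rpow_add (lt_of_le_of_ne this (Ne.symm hx))]

lemma mul_mpow_zero {d : ℕ} {A : Matrix (Fin d) (Fin d) ℂ} (hA : A.PosSemidef) :
    A * mpow A 0 = A := by
  conv_lhs => rw [← mfun_id hA.1]
  conv_rhs => rw [← mfun_id hA.1]
  conv_lhs => rw [mfun_id hA.1]
  nth_rewrite 1 [← mfun_id hA.1]
  rw [mpow, mfun_mul _ _ hA.1]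
  refine mfun_congr hA.1 fun i => ?_
  by_cases hx : hA.1.eigenvalues i = 0 <;> simp [hx]

/-- The support projection of `σ` fixes a factor of `ρ`. -/
lemma factor_mul_supp {d : ℕ} {ρ σ B : Matrix (Fin d) (Fin d) ℂ} (hσ : σ.PosSemidef)
    (hB : ρ = B.conjTranspose * B) (hs : suppSubset ρ σ) : B * mpow σ 0 = B := by
  have h1 : σ * (1 - mpow σ 0) = 0 := by rw [mul_sub, mul_one, mul_mpow_zero hσ, sub_self]
  have h2 : ρ * (1 - mpow σ 0) = 0 := by
    apply Matrix.ext_of_mulVec_single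
    intro i
    rw [← Matrix.mulVec_mulVec, hs _ (by rw [Matrix.mulVec_mulVec, h1, Matrix.zero_mulVec]),
      Matrix.zero_mulVec]
  rw [hB, Matrix.conjTranspose_mul_self_mul_eq_zero] at h2
  rw [mul_sub, mul_one, sub_eq_zero] at h2
  exact h2.symm

lemma suppSubset_mono {d : ℕ} {ρ σ σ' : Matrix (Fin d) (Fin d) ℂ} (hσ : σ.PosSemidef)
    (h : (σ' - σ).PosSemidef) (hs : suppSubset ρ σ) : suppSubset ρ σ' := by
  intro v hv
  apply hs
  rw [← hσ.dotProduct_mulVec_zero_iff]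
  have h1 := h.dotProduct_mulVec_nonneg v
  rw [Matrix.sub_mulVec, hv, zero_sub, dotProduct_neg] at h1
  exact le_antisymm (neg_nonneg.mp h1) (hσ.dotProduct_mulVec_nonneg v)

/-- Operator antitonicity of the relative inverse power, compressed by a factor of `ρ`. -/
lemma compress {d : ℕ} {B σ σ' : Matrix (Fin d) (Fin d) ℂ} (hσ : σ.PosSemidef)
    (hσ' : σ'.PosSemidef) (h : (σ' - σ).PosSemidef)
    (h1 : B * mpow σ 0 = B) (h2 : B * mpow σ' 0 = B) {s : ℝ} (hs0 : 0 < s) (hs1 : s ≤ 1) :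
    (B * mpow σ (-s) * B.conjTranspose - B * mpow σ' (-s) * B.conjTranspose).PosSemidef := by
  have hmono := mpow_mono hσ hσ' h hs0 hs1
  have hApos : (mpow σ s).PosSemidef := by
    have e : mpow σ s = (mpow σ (s / 2)).conjTranspose * mpow σ (s / 2) := by
      rw [mpow_herm hσ, mpow_mul hσ, add_halves]
    rw [e]
    exact Matrix.posSemidef_conjTranspose_mul_self _
  have a1 : mpow σ (-s) * mpow σ s = mpow σ 0 := by rw [mpow_mul hσ, neg_add_cancel]
  have a1' : mpow σ s * mpow σ (-s) = mpow σ 0 := by rw [mpow_mul hσ, add_neg_cancel]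
  have a2 : mpow σ' (-s) * mpow σ' s = mpow σ' 0 := by rw [mpow_mul hσ', neg_add_cancel]
  have c1 : (mpow σ (-s)).conjTranspose = mpow σ (-s) := mfun_herm _ hσ.1
  have c2 : (mpow σ' (-s)).conjTranspose = mpow σ' (-s) := mfun_herm _ hσ'.1
  have c0 : (mpow σ 0).conjTranspose = mpow σ 0 := mfun_herm _ hσ.1
  have h1' : mpow σ 0 * B.conjTranspose = B.conjTranspose := by
    rw [← c0, ← Matrix.conjTranspose_mul, h1]
  generalize mpow σ (-s) = X at *
  generalize mpow σ' (-s) = Y at *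
  generalize mpow σ s = A at *
  generalize mpow σ' s = A' at *
  generalize mpow σ 0 = P at *
  generalize mpow σ' 0 = P' at *
  have p1 := hApos.mul_mul_conjTranspose_same (B * X - B * Y)
  have p2 := hmono.mul_mul_conjTranspose_same (B * Y)
  have p := p1.add p2
  convert p using 1
  simp only [Matrix.conjTranspose_sub, Matrix.conjTranspose_mul, c1, c2]
  have e1 : B * X * A = B := by rw [mul_assoc, a1, h1]
  have e2 : B * Y * A' = B := by rw [mul_assoc, a2, h2]
  have e3 : A * (X * B.conjTranspose) = B.conjTranspose := by rw [← mul_assoc, a1', h1']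
  have e4 : B * Y * A * (X * B.conjTranspose) = B * Y * B.conjTranspose := by
    rw [mul_assoc, e3]
  rw [sub_mul (B * X) (B * Y) A, mul_sub (B * Y) A' A, e1, e2, sub_mul, sub_mul, mul_sub, mul_sub,
    e4]
  simp only [mul_assoc]
  abel

lemma sandR_eq {d : ℕ} {α : ℝ} (hα : 1 < α) {ρ σ B : Matrix (Fin d) (Fin d) ℂ}
    (hσ : σ.PosSemidef) (hB : ρ = B.conjTranspose * B)
    (hP : (B * mpow σ (-((α - 1) / α)) * B.conjTranspose).PosSemidef) :
    sandR α ρ σ = ∑ i, hP.1.eigenvalues i ^ α := by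
  set S := mpow σ (-(α - 1) / (2 * α)) with hS
  have hSh : S.conjTranspose = S := mfun_herm _ hσ.1
  have e1 : S * ρ * S = (B * S).conjTranspose * (B * S) := by
    rw [hB, Matrix.conjTranspose_mul, hSh]
    simp only [mul_assoc]
  have e2 : B * mpow σ (-((α - 1) / α)) * B.conjTranspose = (B * S) * (B * S).conjTranspose := by
    have : -((α - 1) / α) = -(α - 1) / (2 * α) + -(α - 1) / (2 * α) := by
      have : α ≠ 0 := by linarith
      field_simp
      ring
    rw [this, ← mpow_mul hσ, Matrix.conjTranspose_mul, hSh, ← hS]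
    simp only [mul_assoc]
  have hH : (S * ρ * S).IsHermitian := by
    rw [e1]; exact Matrix.isHermitian_conjTranspose_mul_self _
  have heig : hH.eigenvalues = hP.1.eigenvalues := by
    rw [Matrix.IsHermitian.eigenvalues_eq_eigenvalues_iff, e1, e2, Matrix.charpoly_mul_comm]
  rw [sandR, ← hS, mpow, rtr_mfun _ hH, heig]
  refine Finset.sum_congr rfl fun i _ => ?_
  split_ifs with hx
  · rw [hx, Real.zero_rpow (by linarith)]
  · rfl

/-- Dominance property of the sandwiched Rényi power: enlarging the conditioner
`σ ≤ σ'` decreases the Rényi power. -/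
theorem stmt6 {d : ℕ} (ρ σ σ' : Matrix (Fin d) (Fin d) ℂ)
    (hρ : ρ.PosSemidef) (hσ : σ.PosSemidef) (hσ' : σ'.PosSemidef)
    (hρσ : (σ - ρ).PosSemidef) (hσσ' : (σ' - σ).PosSemidef)
    (hsupp : suppSubset ρ σ)
    (α : ℝ) (hα : 1 < α) :
    sandR α ρ σ' ≤ sandR α ρ σ := by
  obtain ⟨B, hB⟩ := exists_factor hρ
  have h1 := factor_mul_supp hσ hB hsupp
  have h2 := factor_mul_supp hσ' hB (suppSubset_mono hσ hσσ' hsupp)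
  have hs0 : 0 < (α - 1) / α := div_pos (by linarith) (by linarith)
  have hs1 : (α - 1) / α ≤ 1 := by rw [div_le_one (by linarith)]; linarith
  have hc := compress hσ hσ' hσσ' h1 h2 hs0 hs1
  have hpos : ∀ {τ : Matrix (Fin d) (Fin d) ℂ}, τ.PosSemidef →
      (B * mpow τ (-((α - 1) / α)) * B.conjTranspose).PosSemidef := by
    intro τ hτ
    have hq : (mpow τ (-((α - 1) / α))).PosSemidef := by
      have e : mpow τ (-((α - 1) / α)) = (mpow τ (-((α - 1) / α) / 2)).conjTranspose *
          mpow τ (-((α - 1) / α) / 2) := by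
        rw [mpow_herm hτ, mpow_mul hτ,
          add_halves]
      rw [e]
      exact Matrix.posSemidef_conjTranspose_mul_self _
    exact hq.mul_mul_conjTranspose_same B
  rw [sandR_eq hα hσ hB (hpos hσ), sandR_eq hα hσ' hB (hpos hσ')]
  exact trace_mono (hpos hσ') (hpos hσ) hc hα
end
end

section
/- Let ρ_i (i in a finite index set) be positive semidefinite operators and ρ = Σ_i ρ_i. Then for α > 1, Σ_i tr((ρ^{−β/(2α)} ρ_i ρ^{−β/(2α)})^α) ≤ tr(ρ), where β = α − 1. -/
open scoped Matrix BigOperators Classical ComplexOrder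

noncomputable section

lemma hc_eq {d : ℕ} {A : Matrix (Fin d) (Fin d) ℂ} (h : A.IsHermitian) (f : ℝ → ℝ) :
    h.cfc f = (h.eigenvectorUnitary : Matrix (Fin d) (Fin d) ℂ)
      * Matrix.diagonal (fun i => ((f (h.eigenvalues i) : ℝ) : ℂ))
      * (h.eigenvectorUnitary : Matrix (Fin d) (Fin d) ℂ)ᴴ := by
  rw [Matrix.IsHermitian.cfc, Unitary.conjStarAlgAut_apply]
  rfl

lemma hc_mul {d : ℕ} {A : Matrix (Fin d) (Fin d) ℂ} (h : A.IsHermitian) (f g : ℝ → ℝ) :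
    h.cfc f * h.cfc g = h.cfc (fun x => f x * g x) := by
  rw [Matrix.IsHermitian.cfc, Matrix.IsHermitian.cfc, Matrix.IsHermitian.cfc, ← map_mul,
    Matrix.diagonal_mul_diagonal]
  congr 2
  ext i
  simp

lemma hc_add {d : ℕ} {A : Matrix (Fin d) (Fin d) ℂ} (h : A.IsHermitian) (f g : ℝ → ℝ) :
    h.cfc f + h.cfc g = h.cfc (fun x => f x + g x) := by
  rw [Matrix.IsHermitian.cfc, Matrix.IsHermitian.cfc, Matrix.IsHermitian.cfc, ← map_add,
    Matrix.diagonal_add]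
  congr 2
  ext i
  simp

lemma hc_smul {d : ℕ} {A : Matrix (Fin d) (Fin d) ℂ} (h : A.IsHermitian) (c : ℝ) (f : ℝ → ℝ) :
    (c : ℂ) • h.cfc f = h.cfc (fun x => c * f x) := by
  rw [Matrix.IsHermitian.cfc, Matrix.IsHermitian.cfc, ← map_smul, ← Matrix.diagonal_smul]
  congr 2
  ext i
  simp

lemma hc_one {d : ℕ} {A : Matrix (Fin d) (Fin d) ℂ} (h : A.IsHermitian) :
    h.cfc (fun _ => 1) = 1 := by
  have : (RCLike.ofReal ∘ (fun _ : ℝ => (1 : ℝ)) ∘ h.eigenvalues : Fin d → ℂ) = fun _ => 1 := by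
    ext i; simp
  rw [Matrix.IsHermitian.cfc, this, Matrix.diagonal_one, map_one]

lemma hc_id {d : ℕ} {A : Matrix (Fin d) (Fin d) ℂ} (h : A.IsHermitian) :
    h.cfc (fun x => x) = A := by
  conv_rhs => rw [h.spectral_theorem]
  rfl

lemma hc_congr {d : ℕ} {A : Matrix (Fin d) (Fin d) ℂ} (h : A.PosSemidef) {f g : ℝ → ℝ}
    (hfg : ∀ x, 0 ≤ x → f x = g x) : h.1.cfc f = h.1.cfc g := by
  rw [Matrix.IsHermitian.cfc, Matrix.IsHermitian.cfc]
  congr 2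
  ext i
  simp [hfg _ (h.eigenvalues_nonneg i)]

lemma hc_psd {d : ℕ} {A : Matrix (Fin d) (Fin d) ℂ} (h : A.PosSemidef) {f : ℝ → ℝ}
    (hf : ∀ x, 0 ≤ x → 0 ≤ f x) : (h.1.cfc f).PosSemidef := by
  rw [hc_eq]
  apply Matrix.PosSemidef.mul_mul_conjTranspose_same
  rw [Matrix.posSemidef_diagonal_iff]
  intro i
  exact_mod_cast hf _ (h.eigenvalues_nonneg i)

lemma hc_herm {d : ℕ} {A : Matrix (Fin d) (Fin d) ℂ} (h : A.IsHermitian) (f : ℝ → ℝ) :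
    (h.cfc f)ᴴ = h.cfc f := by
  rw [hc_eq]
  simp only [Matrix.conjTranspose_mul, Matrix.conjTranspose_conjTranspose,
    Matrix.diagonal_conjTranspose, Matrix.mul_assoc]
  congr 3
  ext i
  simp

lemma rtr_hc {d : ℕ} {A : Matrix (Fin d) (Fin d) ℂ} (h : A.IsHermitian) (f : ℝ → ℝ) :
    rtr (h.cfc f) = ∑ i, f (h.eigenvalues i) := by
  have hu : (h.eigenvectorUnitary : Matrix (Fin d) (Fin d) ℂ)ᴴ
      * (h.eigenvectorUnitary : Matrix (Fin d) (Fin d) ℂ) = 1 :=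
    Unitary.coe_star_mul_self h.eigenvectorUnitary
  rw [rtr, hc_eq, Matrix.trace_mul_cycle, hu, Matrix.one_mul, Matrix.trace_diagonal]
  simp

/-- swap `M Mᴴ` and `Mᴴ M`. -/
lemma sum_swap {d : ℕ} (M : Matrix (Fin d) (Fin d) ℂ) (h1 : (M * Mᴴ).IsHermitian)
    (h2 : (Mᴴ * M).IsHermitian) (f : ℝ → ℝ) :
    ∑ i, f (h1.eigenvalues i) = ∑ i, f (h2.eigenvalues i) := by
  have h := congrArg Polynomial.roots (Matrix.charpoly_mul_comm M Mᴴ)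
  rw [h1.roots_charpoly_eq_eigenvalues, h2.roots_charpoly_eq_eigenvalues] at h
  have h' := congrArg (fun s => (Multiset.map (fun z : ℂ => f z.re) s).sum) h
  simp only [Multiset.map_map, Function.comp_def] at h'
  exact h'

lemma scal {α : ℝ} (hα : 1 < α) {x l : ℝ} (hx : 0 ≤ x) (hl : 0 ≤ l) :
    α * l ^ (α - 1) * (if x = 0 then 0 else x ^ (1 / α)) ≤ x + (α - 1) * l ^ α := by
  have hα0 : 0 < α := by linarith
  have hα1 : 0 < α - 1 := by linarith
  have e : (if x = 0 then 0 else x ^ (1 / α)) = x ^ (1 / α) := by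
    split_ifs with h
    · rw [h, Real.zero_rpow (by positivity)]
    · rfl
  rw [e]
  have hy := Real.young_inequality_of_nonneg (Real.rpow_nonneg hx (1 / α))
    (Real.rpow_nonneg hl (α - 1)) (Real.HolderConjugate.conjExponent hα)
  rw [← Real.rpow_mul hx, ← Real.rpow_mul hl, Real.conjExponent,
    one_div_mul_cancel hα0.ne', Real.rpow_one, mul_div_cancel₀ _ hα1.ne'] at hy
  have := mul_le_mul_of_nonneg_left hy hα0.le
  have e2 : α * (x / α + l ^ α / (α / (α - 1))) = x + (α - 1) * l ^ α := by
    field_simp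
  rw [e2] at this
  linarith

lemma contr {d : ℕ} {K : Matrix (Fin d) (Fin d) ℂ} (h : (1 - K * Kᴴ).PosSemidef) :
    (1 - Kᴴ * K).PosSemidef := by
  have e : 1 - Kᴴ * K = (1 - Kᴴ * K)ᴴ * (1 - Kᴴ * K) + Kᴴ * (1 - K * Kᴴ) * K := by
    simp only [Matrix.conjTranspose_sub, Matrix.conjTranspose_one, Matrix.conjTranspose_mul,
      Matrix.conjTranspose_conjTranspose]
    noncomm_ring
  rw [e]
  exact (Matrix.posSemidef_conjTranspose_mul_self _).add (h.conjTranspose_mul_mul_same K)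

/-- Trace Jensen inequality for a contraction `K`. -/
lemma jens {d : ℕ} {σ K : Matrix (Fin d) (Fin d) ℂ} (hσ : σ.PosSemidef)
    (hK : (1 - K * Kᴴ).PosSemidef) {α : ℝ} (hα : 1 < α)
    (hZ : (Kᴴ * hσ.1.cfc (fun x => if x = 0 then 0 else x ^ (1 / α)) * K).PosSemidef) :
    ∑ i, (if hZ.1.eigenvalues i = 0 then 0 else hZ.1.eigenvalues i ^ α) ≤
      rtr (Kᴴ * σ * K) := by
  set Y := hσ.1.cfc (fun x => if x = 0 then 0 else x ^ (1 / α)) with hY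
  set U : Matrix (Fin d) (Fin d) ℂ := (hZ.1.eigenvectorUnitary : Matrix (Fin d) (Fin d) ℂ) with hU
  have hu : Uᴴ * U = 1 := Unitary.coe_star_mul_self hZ.1.eigenvectorUnitary
  have hu' : U * Uᴴ = 1 := Unitary.coe_mul_star_self hZ.1.eigenvectorUnitary
  have hD : Uᴴ * (Kᴴ * Y * K) * U = Matrix.diagonal (fun i => ((hZ.1.eigenvalues i : ℝ) : ℂ)) := by
    have := hc_eq hZ.1 (fun x => x)
    rw [hc_id] at this
    rw [← hU] at this
    calc _ = Uᴴ * (U * Matrix.diagonal (fun i => ((hZ.1.eigenvalues i : ℝ) : ℂ)) * Uᴴ) * U :=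
            congrArg (fun X => Uᴴ * X * U) this
      _ = (Uᴴ * U) * Matrix.diagonal (fun i => ((hZ.1.eigenvalues i : ℝ) : ℂ)) * (Uᴴ * U) := by
            simp only [Matrix.mul_assoc]
      _ = _ := by rw [hu]; simp
  have htr : rtr (Kᴴ * σ * K) = ∑ i, ((Uᴴ * (Kᴴ * σ * K) * U) i i).re := by
    rw [rtr, ← Complex.re_sum]
    change _ = (Matrix.trace (Uᴴ * (Kᴴ * σ * K) * U)).re
    rw [Matrix.trace_mul_cycle Uᴴ, hu', Matrix.one_mul]
  rw [htr]
  apply Finset.sum_le_sum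
  intro i _
  set l := hZ.1.eigenvalues i with hl
  have hl0 : 0 ≤ l := hZ.eigenvalues_nonneg i
  have e : (if l = 0 then 0 else l ^ α) = l ^ α := by
    split_ifs with h
    · rw [h, Real.zero_rpow (by linarith)]
    · rfl
  rw [e]
  have hpsd : (σ + (((α - 1) * l ^ α : ℝ) : ℂ) • (1 : Matrix (Fin d) (Fin d) ℂ)
      + ((-(α * l ^ (α - 1)) : ℝ) : ℂ) • Y).PosSemidef := by
    have := hc_psd hσ (f := fun x => (x + ((α - 1) * l ^ α) * 1)
      + (-(α * l ^ (α - 1))) * (if x = 0 then 0 else x ^ (1 / α))) (by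
        intro x hx
        have := scal hα hx hl0
        linarith)
    rw [← hc_add, ← hc_add, ← hc_smul, ← hc_smul, hc_one, hc_id] at this
    exact this
  have h1 := ((hpsd.conjTranspose_mul_mul_same K).conjTranspose_mul_mul_same U).diag_nonneg (i := i)
  have h2 := ((contr hK).conjTranspose_mul_mul_same U).diag_nonneg (i := i)
  have e2 : Uᴴ * (1 - Kᴴ * K) * U = 1 - Uᴴ * (Kᴴ * K) * U := by
    rw [Matrix.mul_sub, Matrix.sub_mul, Matrix.mul_one, hu]
  have e1 : Uᴴ * (Kᴴ * (σ + (((α - 1) * l ^ α : ℝ) : ℂ) • (1 : Matrix (Fin d) (Fin d) ℂ)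
      + ((-(α * l ^ (α - 1)) : ℝ) : ℂ) • Y) * K) * U =
      Uᴴ * (Kᴴ * σ * K) * U + (((α - 1) * l ^ α : ℝ) : ℂ) • (Uᴴ * (Kᴴ * K) * U)
      + ((-(α * l ^ (α - 1)) : ℝ) : ℂ) • (Uᴴ * (Kᴴ * Y * K) * U) := by
    simp only [Matrix.mul_add, Matrix.add_mul, Matrix.mul_smul, Matrix.smul_mul, Matrix.mul_one]
  rw [e1, hD] at h1
  rw [e2] at h2
  have h1' := (Complex.le_def.1 h1).1
  have h2' := (Complex.le_def.1 h2).1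
  simp only [Matrix.add_apply, Matrix.sub_apply, Matrix.smul_apply, Matrix.diagonal_apply_eq,
    Matrix.one_apply_eq, Complex.add_re, Complex.sub_re, smul_eq_mul, Complex.re_ofReal_mul,
    Complex.zero_re, Complex.one_re, Complex.ofReal_re] at h1' h2'
  rw [← hl] at h1'
  have hp : l ^ (α - 1) * l = l ^ α := by
    rcases eq_or_lt_of_le hl0 with h | h
    · rw [← h, Real.zero_rpow (by linarith : α ≠ 0)]; simp
    · rw [← Real.rpow_add_one h.ne']; congr 1; ring
  have hc : 0 ≤ (α - 1) * l ^ α := mul_nonneg (by linarith) (Real.rpow_nonneg hl0 _)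
  have h3 := mul_nonneg hc h2'
  have h4 : -(α * l ^ (α - 1)) * l = - (α * l ^ α) := by rw [← hp]; ring
  rw [h4] at h1'
  nlinarith

/-- Summation inequality: `Σ_i R_α(ρ_i | Σ_j ρ_j) ≤ tr(Σ_j ρ_j)` for `α > 1`. -/
theorem stmt7 {d : ℕ} {I : Type*} [Fintype I]
    (ρ : I → Matrix (Fin d) (Fin d) ℂ) (hρ : ∀ i, (ρ i).PosSemidef)
    (α : ℝ) (hα : 1 < α) :
    ∑ i, sandR α (ρ i) (∑ j, ρ j) ≤ rtr (∑ j, ρ j) := by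
  set σ := ∑ j, ρ j with hσdef
  have hσ : σ.PosSemidef := Matrix.posSemidef_sum _ (fun i _ => hρ i)
  have hα0 : 0 < α := by linarith
  set R := hσ.1.cfc (fun x => if x = 0 then 0 else x ^ (-(1 / 2) : ℝ)) with hR
  set P := hσ.1.cfc (fun x => if x = 0 then 0 else 1) with hP
  have hRσR : R * σ * R = P := by
    conv_lhs => rw [← hc_id hσ.1]
    rw [hR, hc_mul, hc_mul]
    apply hc_congr hσ
    intro x hx
    by_cases h : x = 0
    · simp [h]
    · have hx' : 0 < x := lt_of_le_of_ne hx (Ne.symm h)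
      simp only [h, if_false]
      nth_rewrite 2 [← Real.rpow_one x]
      rw [← Real.rpow_add hx', ← Real.rpow_add hx']
      norm_num
  have hPσ : P * σ = σ := by
    conv_lhs => rw [← hc_id hσ.1]
    conv_rhs => rw [← hc_id hσ.1]
    rw [hP, hc_mul]
    apply hc_congr hσ
    intro x hx
    by_cases h : x = 0 <;> simp [h]
  have h1P : (1 - P).PosSemidef := by
    have := hc_psd hσ (f := fun x => 1 + (-1) * (if x = 0 then 0 else 1)) (by
      intro x hx
      split_ifs <;> norm_num)
    rw [← hc_add, ← hc_smul, hc_one] at this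
    simpa [sub_eq_add_neg] using this
  have key : ∀ i, sandR α (ρ i) σ ≤ rtr (P * ρ i) := by
    intro i
    obtain ⟨B, hB⟩ : ∃ B : Matrix (Fin d) (Fin d) ℂ, ρ i = Bᴴ * B := by
      refine ⟨(hρ i).1.cfc Real.sqrt, ?_⟩
      rw [hc_herm, hc_mul]
      conv_lhs => rw [← hc_id (hρ i).1]
      apply hc_congr (hρ i)
      intro x hx
      exact (Real.mul_self_sqrt hx).symm
    set T := hσ.1.cfc (fun x => if x = 0 then 0 else x ^ (-(α - 1) / (2 * α))) with hT
    set Y := hσ.1.cfc (fun x => if x = 0 then 0 else x ^ (1 / α)) with hY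
    have hTm : mpow σ (-(α - 1) / (2 * α)) = T := by
      rw [mpow, mfun, dif_pos hσ.1]
    have hTh : Tᴴ = T := hc_herm _ _
    have hRh : Rᴴ = R := hc_herm _ _
    have hTT : T * T = R * Y * R := by
      rw [hT, hR, hY, hc_mul, hc_mul, hc_mul]
      apply hc_congr hσ
      intro x hx
      by_cases h : x = 0
      · simp [h]
      · have hx' : 0 < x := lt_of_le_of_ne hx (Ne.symm h)
        simp only [h, if_false]
        rw [← Real.rpow_add hx', ← Real.rpow_add hx', ← Real.rpow_add hx']
        congr 1
        field_simp
        ring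
    set M := T * Bᴴ with hM
    set K := R * Bᴴ with hK
    have hX : T * ρ i * T = M * Mᴴ := by
      rw [hM, hB, Matrix.conjTranspose_mul, hTh, Matrix.conjTranspose_conjTranspose]
      simp only [Matrix.mul_assoc]
    have hX2 : Mᴴ * M = Kᴴ * Y * K := by
      rw [hM, hK, Matrix.conjTranspose_mul, hTh, Matrix.conjTranspose_mul, hRh,
        Matrix.conjTranspose_conjTranspose]
      calc _ = B * (T * T) * Bᴴ := by simp only [Matrix.mul_assoc]
        _ = _ := by rw [hTT]; simp only [Matrix.mul_assoc]
    have hKK : K * Kᴴ = R * ρ i * R := by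
      rw [hK, hB, Matrix.conjTranspose_mul, hRh, Matrix.conjTranspose_conjTranspose]
      simp only [Matrix.mul_assoc]
    have hcon : (1 - K * Kᴴ).PosSemidef := by
      have hrest : (σ - ρ i).PosSemidef := by
        rw [hσdef, ← Finset.add_sum_erase _ _ (Finset.mem_univ i), add_sub_cancel_left]
        exact Matrix.posSemidef_sum _ (fun i _ => hρ i)
      have := h1P.add (hrest.conjTranspose_mul_mul_same R)
      rw [hRh, Matrix.mul_sub, Matrix.sub_mul, hRσR, ← hKK] at this
      simpa using this
    have hZ' : (Mᴴ * M).PosSemidef := Matrix.posSemidef_conjTranspose_mul_self M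
    have hX1 : (M * Mᴴ).IsHermitian := (Matrix.posSemidef_self_mul_conjTranspose M).1
    have hs := sum_swap M hX1 hZ'.1 (fun x => if x = 0 then 0 else x ^ α)
    have hj : ∑ i, (if hZ'.1.eigenvalues i = 0 then 0 else hZ'.1.eigenvalues i ^ α) ≤
        rtr (Kᴴ * σ * K) := by
      clear hs
      revert hZ'
      rw [hX2]
      intro hZ'
      exact jens hσ hcon hα hZ'
    have ht : rtr (Kᴴ * σ * K) = rtr (P * ρ i) := by
      rw [rtr, rtr, ← hRσR]
      refine congrArg Complex.re ?_
      calc (Kᴴ * σ * K).trace = ((K * Kᴴ) * σ).trace := Matrix.trace_mul_cycle _ _ _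
        _ = ((R * ρ i) * (R * σ)).trace := by rw [hKK, Matrix.mul_assoc (R * ρ i)]
        _ = ((R * σ) * (R * ρ i)).trace := Matrix.trace_mul_comm _ _
        _ = (R * σ * R * ρ i).trace := by rw [Matrix.mul_assoc (R * σ)]
    rw [sandR, hTm, hX, mpow, mfun, dif_pos hX1, rtr_hc, hs, ← ht]
    exact hj
  calc ∑ i, sandR α (ρ i) σ ≤ ∑ i, rtr (P * ρ i) := Finset.sum_le_sum (fun i _ => key i)
    _ = rtr σ := by
      simp only [rtr]
      rw [← Complex.re_sum, ← Matrix.trace_sum, ← Finset.mul_sum, ← hσdef, hPσ]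
end
end

section
/- If F(c,z) is a QEF with power β > 0 for a model C(CZ) (satisfying the QEF inequality at every state of the model) and 0 < γ ≤ 1, then F(c,z)^γ is a QEF with power γβ for the same model. -/
open scoped Matrix BigOperators Classical ComplexOrder

noncomputable section

open scoped MatrixOrder in
lemma psd_sqrt {d : ℕ} (A : Matrix (Fin d) (Fin d) ℂ) (hA : A.PosSemidef) :
    ∃ B, A = Bᴴ * B :=
  CStarAlgebra.nonneg_iff_eq_star_mul_self.mp hA.nonneg

lemma spec_aux {d : ℕ} (A : Matrix (Fin d) (Fin d) ℂ) (hA : A.PosSemidef) :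
    ∃ (U : Matrix (Fin d) (Fin d) ℂ) (e : Fin d → ℝ), Uᴴ * U = 1 ∧ U * Uᴴ = 1 ∧
      (∀ i, 0 ≤ e i) ∧ A = U * Matrix.diagonal (fun i => (e i : ℂ)) * Uᴴ ∧
      (∀ f, mfun f A = U * Matrix.diagonal (fun i => (f (e i) : ℂ)) * Uᴴ) ∧
      (∀ f, rtr (mfun f A) = ∑ i, f (e i)) := by
  have h := hA.isHermitian
  have h1 : ((h.eigenvectorUnitary : Matrix (Fin d) (Fin d) ℂ))ᴴ * h.eigenvectorUnitary = 1 :=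
    Unitary.coe_star_mul_self _
  have h2 : (h.eigenvectorUnitary : Matrix (Fin d) (Fin d) ℂ) *
      (h.eigenvectorUnitary : Matrix (Fin d) (Fin d) ℂ)ᴴ = 1 :=
    Unitary.coe_mul_star_self _
  have h3 : ∀ f, mfun f A = (h.eigenvectorUnitary : Matrix (Fin d) (Fin d) ℂ) *
      Matrix.diagonal (fun i => (f (h.eigenvalues i) : ℂ)) *
      (h.eigenvectorUnitary : Matrix (Fin d) (Fin d) ℂ)ᴴ := by
    intro f
    rw [mfun, dif_pos h]
    rfl
  refine ⟨h.eigenvectorUnitary, h.eigenvalues, h1, h2, hA.eigenvalues_nonneg,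
    h.spectral_theorem, h3, ?_⟩
  intro f
  rw [h3, rtr, Matrix.trace_mul_comm, ← mul_assoc, h1, one_mul, Matrix.trace_diagonal]
  simp

lemma rtr_mfun_eig {d : ℕ} (A : Matrix (Fin d) (Fin d) ℂ) (h : A.IsHermitian) (f : ℝ → ℝ) :
    rtr (mfun f A) = ((A.charpoly.roots).map (fun z : ℂ => f z.re)).sum := by
  have h1 : ((h.eigenvectorUnitary : Matrix (Fin d) (Fin d) ℂ))ᴴ * h.eigenvectorUnitary = 1 :=
    Unitary.coe_star_mul_self _
  have h3 : mfun f A = (h.eigenvectorUnitary : Matrix (Fin d) (Fin d) ℂ) *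
      Matrix.diagonal (fun i => (f (h.eigenvalues i) : ℂ)) *
      (h.eigenvectorUnitary : Matrix (Fin d) (Fin d) ℂ)ᴴ := by
    rw [mfun, dif_pos h]
    rfl
  rw [h3, rtr, Matrix.trace_mul_comm, ← mul_assoc, h1, one_mul, Matrix.trace_diagonal,
    h.roots_charpoly_eq_eigenvalues, Multiset.map_map, Complex.re_sum]
  rfl

lemma rtr_mfun_comm {d : ℕ} (A : Matrix (Fin d) (Fin d) ℂ) (f : ℝ → ℝ) :
    rtr (mfun f (Aᴴ * A)) = rtr (mfun f (A * Aᴴ)) := by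
  rw [rtr_mfun_eig _ (Matrix.isHermitian_conjTranspose_mul_self A),
    rtr_mfun_eig _ (Matrix.isHermitian_mul_conjTranspose_self A), Matrix.charpoly_mul_comm]

/-- Hölder in geometric-mean form. -/
lemma holder_aux {ι : Type*} (s : Finset ι) (a b : ι → ℝ) (ha : ∀ i, 0 ≤ a i) (hb : ∀ i, 0 ≤ b i)
    (t : ℝ) (h0 : 0 < t) (h1 : t < 1) :
    ∑ i ∈ s, a i ^ (1 - t) * b i ^ t ≤ (∑ i ∈ s, a i) ^ (1 - t) * (∑ i ∈ s, b i) ^ t := by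
  have h1' : 0 < 1 - t := by linarith
  have hpq : (1 - t)⁻¹.HolderConjugate t⁻¹ := by
    rw [Real.holderConjugate_iff]
    refine ⟨(one_lt_inv₀ h1').2 (by linarith), by simp⟩
  have := Real.inner_le_Lp_mul_Lq_of_nonneg s (f := fun i => a i ^ (1 - t))
    (g := fun i => b i ^ t) hpq (fun i _ => Real.rpow_nonneg (ha i) _)
    (fun i _ => Real.rpow_nonneg (hb i) _)
  simpa [Real.rpow_rpow_inv, ha, hb, h1'.ne', h0.ne'] using this

lemma rtr_diag {d : ℕ} (W : Matrix (Fin d) (Fin d) ℂ) (D E : Fin d → ℝ) :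
    rtr (Matrix.diagonal (fun i => (D i : ℂ)) * W * Matrix.diagonal (fun i => (E i : ℂ)) * Wᴴ) =
      ∑ p : Fin d × Fin d, Complex.normSq (W p.1 p.2) * D p.1 * E p.2 := by
  rw [Fintype.sum_prod_type, rtr, Matrix.trace, Complex.re_sum]
  refine Finset.sum_congr rfl fun i _ => ?_
  rw [Matrix.diag_apply, Matrix.mul_apply, Complex.re_sum]
  refine Finset.sum_congr rfl fun j _ => ?_
  rw [Matrix.mul_diagonal, Matrix.diagonal_mul, Matrix.conjTranspose_apply]
  simp [Complex.normSq_apply]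
  ring

lemma normSq_row {d : ℕ} (W : Matrix (Fin d) (Fin d) ℂ) (h : W * Wᴴ = 1) (i : Fin d) :
    ∑ j, Complex.normSq (W i j) = 1 := by
  have := congrFun (congrFun h i) i
  rw [Matrix.mul_apply, Matrix.one_apply_eq] at this
  simp only [Matrix.conjTranspose_apply, RCLike.star_def, Complex.mul_conj] at this
  exact_mod_cast this

lemma normSq_col {d : ℕ} (W : Matrix (Fin d) (Fin d) ℂ) (h : Wᴴ * W = 1) (j : Fin d) :
    ∑ i, Complex.normSq (W i j) = 1 := by
  have := normSq_row Wᴴ (by simpa using h) j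
  simpa using this

/-- Trace Hölder inequality. -/
lemma trace_holder {d : ℕ} (X V : Matrix (Fin d) (Fin d) ℂ) (hX : X.PosSemidef)
    (hV1 : Vᴴ * V = 1) (hV2 : V * Vᴴ = 1)
    (q : Fin d → ℝ) (hq : ∀ i, 0 ≤ q i) (α : ℝ) (hα : 1 < α) :
    rtr (X * (V * Matrix.diagonal (fun i => ((q i ^ (1 - α⁻¹) : ℝ) : ℂ)) * Vᴴ)) ≤
      (∑ i, q i) ^ (1 - α⁻¹) * (rtr (mpow X α)) ^ (α⁻¹) := by
  obtain ⟨P, x, hP1, hP2, hx, hXe, -, htr⟩ := spec_aux X hX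
  have hα0 : 0 < α := by linarith
  have e1 : rtr (X * (V * Matrix.diagonal (fun i => ((q i ^ (1 - α⁻¹) : ℝ) : ℂ)) * Vᴴ)) =
      ∑ p : Fin d × Fin d, Complex.normSq ((Pᴴ * V) p.1 p.2) * x p.1 * q p.2 ^ (1 - α⁻¹) := by
    refine Eq.trans ?_ (rtr_diag (Pᴴ * V) x (fun j => q j ^ (1 - α⁻¹)))
    rw [hXe]
    unfold rtr
    rw [Matrix.mul_assoc P, Matrix.mul_assoc P, Matrix.trace_mul_comm P]
    simp [Matrix.mul_assoc]
  have e2 : rtr (mpow X α) = ∑ p : Fin d × Fin d,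
      Complex.normSq ((Pᴴ * V) p.1 p.2) * x p.1 ^ α := by
    rw [mpow, htr, Fintype.sum_prod_type]
    refine Finset.sum_congr rfl fun i _ => ?_
    dsimp only
    rw [← Finset.sum_mul, normSq_row, one_mul]
    · split_ifs with h
      · rw [h, Real.zero_rpow hα0.ne']
      · rfl
    · rw [Matrix.conjTranspose_mul, Matrix.conjTranspose_conjTranspose, Matrix.mul_assoc,
        ← Matrix.mul_assoc V, hV2, Matrix.one_mul, hP1]
  have e3 : ∑ i, q i = ∑ p : Fin d × Fin d, Complex.normSq ((Pᴴ * V) p.1 p.2) * q p.2 := by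
    rw [Fintype.sum_prod_type_right]
    refine Finset.sum_congr rfl fun i _ => ?_
    dsimp only
    rw [← Finset.sum_mul, normSq_col, one_mul]
    rw [Matrix.conjTranspose_mul, Matrix.conjTranspose_conjTranspose, Matrix.mul_assoc,
        ← Matrix.mul_assoc P, hP2, Matrix.one_mul, hV1]
  rw [e1, e2, e3]
  refine le_trans (le_of_eq ?_) (holder_aux Finset.univ _ _
    (fun p => mul_nonneg (Complex.normSq_nonneg _) (hq _))
    (fun p => mul_nonneg (Complex.normSq_nonneg _) (Real.rpow_nonneg (hx _) _))
    α⁻¹ (by positivity) (inv_lt_one_of_one_lt₀ hα))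
  refine Finset.sum_congr rfl fun p _ => ?_
  have hw := Complex.normSq_nonneg ((Pᴴ * V) p.1 p.2)
  rw [Real.mul_rpow hw (hq _), Real.mul_rpow hw (Real.rpow_nonneg (hx _) _),
    Real.rpow_rpow_inv (hx _) hα0.ne']
  have : Complex.normSq ((Pᴴ * V) p.1 p.2) = Complex.normSq ((Pᴴ * V) p.1 p.2) ^ (1 - α⁻¹) *
      Complex.normSq ((Pᴴ * V) p.1 p.2) ^ (α⁻¹) := by
    rw [← Real.rpow_add_of_nonneg hw]
    · simp
    · have := inv_lt_one_of_one_lt₀ hα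
      linarith
    · positivity
  nth_rewrite 1 [this]
  ring

/-- generalized power with zero on the kernel -/
def pw (p x : ℝ) : ℝ := if x = 0 then 0 else x ^ p

lemma pw_nonneg (p x : ℝ) (hx : 0 ≤ x) : 0 ≤ pw p x := by
  unfold pw
  split_ifs
  · exact le_rfl
  · exact Real.rpow_nonneg hx _

lemma sandR_eq_s12 {d : ℕ} (B σ U : Matrix (Fin d) (Fin d) ℂ) (e : Fin d → ℝ)
    (hU : Uᴴ * U = 1) (he : ∀ i, 0 ≤ e i)
    (hf : ∀ f, mfun f σ = U * Matrix.diagonal (fun i => (f (e i) : ℂ)) * Uᴴ)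
    (α : ℝ) (hα : 1 < α) :
    sandR α (Bᴴ * B) σ = rtr (mpow (B * (U * Matrix.diagonal
      (fun i => ((pw (-(1 - α⁻¹)) (e i) : ℝ) : ℂ)) * Uᴴ) * Bᴴ) α) ∧
    (B * (U * Matrix.diagonal
      (fun i => ((pw (-(1 - α⁻¹)) (e i) : ℝ) : ℂ)) * Uᴴ) * Bᴴ).PosSemidef := by
  set S := mpow σ (-(α - 1) / (2 * α)) with hS
  have hS1 : S = U * Matrix.diagonal
      (fun i => ((pw (-(α - 1) / (2 * α)) (e i) : ℝ) : ℂ)) * Uᴴ := by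
    rw [hS, mpow, hf]; rfl
  have hSh : Sᴴ = S := by
    rw [hS1, Matrix.conjTranspose_mul, Matrix.conjTranspose_mul, Matrix.conjTranspose_conjTranspose,
      Matrix.diagonal_conjTranspose, Matrix.mul_assoc]
    congr 3
    ext i
    simp
  have hSS : S * S = U * Matrix.diagonal
      (fun i => ((pw (-(1 - α⁻¹)) (e i) : ℝ) : ℂ)) * Uᴴ := by
    rw [hS1]
    have : ∀ D : Matrix (Fin d) (Fin d) ℂ, U * D * Uᴴ * (U * D * Uᴴ) = U * (D * D) * Uᴴ := by
      intro D
      calc _ = U * D * (Uᴴ * U) * D * Uᴴ := by simp only [Matrix.mul_assoc]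
        _ = _ := by rw [hU]; simp only [Matrix.mul_assoc, Matrix.one_mul]
    rw [this, Matrix.diagonal_mul_diagonal]
    congr 3
    ext i
    rw [← Complex.ofReal_mul]
    congr 1
    unfold pw
    split_ifs with h
    · simp
    · rw [← Real.rpow_add (lt_of_le_of_ne (he i) (Ne.symm h))]
      congr 1
      field_simp
      ring
  have hA : B * (S * S) * Bᴴ = (B * S) * (B * S)ᴴ := by
    rw [Matrix.conjTranspose_mul, hSh]; simp only [Matrix.mul_assoc]
  rw [← hSS]
  constructor
  · rw [hA, mpow, ← rtr_mfun_comm, sandR, ← hS, ← mpow, Matrix.conjTranspose_mul, hSh]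
    simp only [Matrix.mul_assoc]
  · rw [hA]; exact Matrix.posSemidef_self_mul_conjTranspose _

lemma sandR_nonneg {d : ℕ} (τ σ : Matrix (Fin d) (Fin d) ℂ) (hτ : τ.PosSemidef)
    (hσ : σ.PosSemidef) (α : ℝ) (hα : 1 < α) : 0 ≤ sandR α τ σ := by
  obtain ⟨B, rfl⟩ : ∃ B, τ = Bᴴ * B := psd_sqrt τ hτ
  obtain ⟨U, e, hU, -, he, -, hf, -⟩ := spec_aux σ hσ
  obtain ⟨h1, h2⟩ := sandR_eq_s12 B σ U e hU he hf α hα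
  rw [h1]
  obtain ⟨V, y, -, -, hy, -, -, htr⟩ := spec_aux _ h2
  rw [mpow, htr]
  exact Finset.sum_nonneg fun i _ => pw_nonneg α (y i) (hy i)

lemma sandR_interp {d : ℕ} (τ σ : Matrix (Fin d) (Fin d) ℂ) (hτ : τ.PosSemidef)
    (hσ : σ.PosSemidef) (β γ : ℝ) (hβ : 0 < β) (h0 : 0 < γ) (h1 : γ < 1) :
    sandR (1 + γ * β) τ σ ≤ rtr τ ^ (1 - γ) * sandR (1 + β) τ σ ^ γ := by
  have hRα := sandR_nonneg τ σ hτ hσ (1 + β) (by linarith)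
  obtain ⟨B, rfl⟩ : ∃ B, τ = Bᴴ * B := psd_sqrt τ hτ
  obtain ⟨U, e, hU, hU2, he, -, hf, -⟩ := spec_aux σ hσ
  have hγβ : 0 < γ * β := by positivity
  set α := 1 + β with hα
  set α' := 1 + γ * β with hα'
  have hα1 : 1 < α := by linarith
  have hα1' : 1 < α' := by linarith
  have hαp : 0 < α := by linarith
  have hαp' : 0 < α' := by linarith
  obtain ⟨hR, hXp⟩ := sandR_eq_s12 B σ U e hU he hf α hα1
  obtain ⟨hR', hYp⟩ := sandR_eq_s12 B σ U e hU he hf α' hα1'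
  obtain ⟨V, y, hV1, hV2, hy, hYe, -, htr⟩ := spec_aux _ hYp
  set s := 1 - α⁻¹ with hs
  set s' := 1 - α'⁻¹ with hs'
  have hsp : 0 < s := by have := inv_lt_one_of_one_lt₀ hα1; linarith
  have hsp' : 0 < s' := by have := inv_lt_one_of_one_lt₀ hα1'; linarith
  have hss : s' < s := by
    have : α⁻¹ < α'⁻¹ := inv_strictAnti₀ hαp' (by nlinarith)
    linarith
  set q : Fin d → ℝ := fun j => y j ^ α' with hq
  have hqn : ∀ j, 0 ≤ q j := fun j => Real.rpow_nonneg (hy j) _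
  have hQ : sandR α' (Bᴴ * B) σ = ∑ j, q j := by
    rw [hR', mpow, htr]
    refine Finset.sum_congr rfl fun j _ => ?_
    split_ifs with h
    · simp [hq, h, Real.zero_rpow hαp'.ne']
    · rfl
  have hgen : ∀ r : ℝ, rtr (B * (U * Matrix.diagonal (fun i => ((pw (-r) (e i) : ℝ) : ℂ)) * Uᴴ) * Bᴴ
      * (V * Matrix.diagonal (fun i => ((q i ^ r : ℝ) : ℂ)) * Vᴴ)) =
      ∑ p : Fin d × Fin d, Complex.normSq ((Uᴴ * Bᴴ * V) p.1 p.2) * pw (-r) (e p.1) * q p.2 ^ r := by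
    intro r
    refine Eq.trans ?_ (rtr_diag (Uᴴ * Bᴴ * V) (fun i => pw (-r) (e i)) (fun j => q j ^ r))
    unfold rtr
    rw [← Matrix.mul_assoc B, ← Matrix.mul_assoc B]
    simp only [Matrix.mul_assoc]
    rw [← Matrix.mul_assoc B, Matrix.trace_mul_comm]
    simp [Matrix.mul_assoc]
  have hw : rtr (Bᴴ * B) = ∑ p : Fin d × Fin d, Complex.normSq ((Uᴴ * Bᴴ * V) p.1 p.2) := by
    have := rtr_diag (Uᴴ * Bᴴ * V) (fun _ => 1) (fun _ => 1)
    simp only [mul_one, Complex.ofReal_one, Matrix.diagonal_one, one_mul] at this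
    rw [← this]
    unfold rtr
    congr 1
    calc _ = (Bᴴ * B * (U * Uᴴ)).trace := by rw [hU2, Matrix.mul_one]
      _ = (Uᴴ * (Bᴴ * B * U)).trace := by rw [← Matrix.mul_assoc, Matrix.trace_mul_comm]
      _ = (Uᴴ * (Bᴴ * (V * Vᴴ) * B * U)).trace := by rw [hV2, Matrix.mul_one]
      _ = _ := by simp [Matrix.mul_assoc]
  have hA : sandR α' (Bᴴ * B) σ = ∑ p : Fin d × Fin d,
      Complex.normSq ((Uᴴ * Bᴴ * V) p.1 p.2) * pw (-s') (e p.1) * q p.2 ^ s' := by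
    rw [← hgen, hQ, hYe]
    have : ∀ D E : Matrix (Fin d) (Fin d) ℂ, V * D * Vᴴ * (V * E * Vᴴ) = V * (D * E) * Vᴴ := by
      intro D E
      calc _ = V * D * (Vᴴ * V) * E * Vᴴ := by simp only [Matrix.mul_assoc]
        _ = _ := by rw [hV1]; simp only [Matrix.mul_assoc, Matrix.one_mul]
    rw [this, Matrix.diagonal_mul_diagonal, rtr, Matrix.trace_mul_comm, ← Matrix.mul_assoc, hV1,
      Matrix.one_mul, Matrix.trace_diagonal, Complex.re_sum]
    refine Finset.sum_congr rfl fun j _ => ?_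
    rw [← Complex.ofReal_mul, Complex.ofReal_re]
    simp only [hq]
    rw [← Real.rpow_mul (hy j)]
    have h3 : α' * s' = α' - 1 := by rw [hs']; field_simp
    rw [h3]
    nth_rewrite 2 [← Real.rpow_one (y j)]
    rw [← Real.rpow_add_of_nonneg (hy j) (by norm_num) (by linarith)]
    congr 1
    ring
  have hB := trace_holder _ V hXp hV1 hV2 q hqn α hα1
  rw [← hs, hgen, ← hR, ← hQ] at hB
  have ht0 : 0 < s' / s := by positivity
  have ht1 : s' / s < 1 := (div_lt_one hsp).2 hss
  have hwn := fun p : Fin d × Fin d => Complex.normSq_nonneg ((Uᴴ * Bᴴ * V) p.1 p.2)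
  have hterm : ∀ p : Fin d × Fin d, 0 ≤ 
      Complex.normSq ((Uᴴ * Bᴴ * V) p.1 p.2) * pw (-s) (e p.1) * q p.2 ^ s := fun p =>
    mul_nonneg (mul_nonneg (hwn p) (pw_nonneg _ _ (he _))) (Real.rpow_nonneg (hqn _) _)
  have hC : sandR α' (Bᴴ * B) σ ≤ (rtr (Bᴴ * B)) ^ (1 - s' / s) * (∑ p : Fin d × Fin d,
      Complex.normSq ((Uᴴ * Bᴴ * V) p.1 p.2) * pw (-s) (e p.1) * q p.2 ^ s) ^ (s' / s) := by
    rw [hw, hA]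
    refine le_trans (le_of_eq ?_) (holder_aux Finset.univ _ _ hwn hterm (s' / s) ht0 ht1)
    refine Finset.sum_congr rfl fun p _ => ?_
    rw [Real.mul_rpow (mul_nonneg (hwn p) (pw_nonneg _ _ (he _))) (Real.rpow_nonneg (hqn _) _),
      Real.mul_rpow (hwn p) (pw_nonneg _ _ (he _)), ← Real.rpow_mul (hqn _),
      mul_div_cancel₀ _ hsp.ne', ← mul_assoc, ← mul_assoc,
      ← Real.rpow_add_of_nonneg (hwn p) (by linarith) ht0.le]
    have : pw (-s) (e p.1) ^ (s' / s) = pw (-s') (e p.1) := by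
      unfold pw
      split_ifs with h
      · exact Real.zero_rpow ht0.ne'
      · rw [← Real.rpow_mul (he _)]
        congr 1
        field_simp
    rw [this]
    simp
  have hQn : 0 ≤ sandR α' (Bᴴ * B) σ := by
    rw [hQ]; exact Finset.sum_nonneg fun j _ => hqn j
  have hT : 0 ≤ rtr (Bᴴ * B) := by
    rw [hw]; exact Finset.sum_nonneg fun p _ => hwn p
  generalize sandR α' (Bᴴ * B) σ = Q at *
  generalize sandR α (Bᴴ * B) σ = R at *
  generalize rtr (Bᴴ * B) = T at *
  have hD : Q ≤ T ^ (1 - s' / s) * (Q ^ s * R ^ α⁻¹) ^ (s' / s) := by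
    refine hC.trans ?_
    gcongr
    exact Finset.sum_nonneg fun p _ => hterm p
  rw [Real.mul_rpow (Real.rpow_nonneg hQn _) (Real.rpow_nonneg hRα _), ← Real.rpow_mul hQn,
    mul_div_cancel₀ _ hsp.ne'] at hD
  rcases hQn.eq_or_lt with h | hQp
  · rw [← h]; positivity
  have hE : Q ^ α'⁻¹ ≤ T ^ (1 - s' / s) * (R ^ α⁻¹) ^ (s' / s) := by
    have h4 : Q = Q ^ s' * Q ^ α'⁻¹ := by
      rw [← Real.rpow_add hQp, hs']; simp
    have h5 : 0 < Q ^ s' := Real.rpow_pos_of_pos hQp _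
    refine le_of_mul_le_mul_left ?_ h5
    rw [← h4]
    linarith
  have hG := Real.rpow_le_rpow (by positivity) hE hαp'.le
  rw [Real.rpow_inv_rpow hQn hαp'.ne', Real.mul_rpow (by positivity) (by positivity),
    ← Real.rpow_mul hT, ← Real.rpow_mul hRα, ← Real.rpow_mul hRα] at hG
  have hsv : s = β / α := by rw [hs]; field_simp; rw [hα]; ring
  have hsv' : s' = γ * β / α' := by rw [hs']; field_simp; rw [hα']; ring
  have x1 : (1 - s' / s) * α' = 1 - γ := by
    rw [hsv, hsv']; field_simp; rw [hα, hα']; ring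
  have x2 : α⁻¹ * (s' / s) * α' = γ := by
    rw [hsv, hsv']; field_simp
  rwa [x1, x2] at hG

/-- Power reduction: if `F` is a QEF with power `β` for a model, then `F^γ` is a QEF
with power `γβ` for the same model, for any `0 < γ ≤ 1`. -/
theorem stmt12 {d : ℕ} {C Z : Type*} [Fintype C] [Fintype Z]
    (M : Set ((C × Z) → Matrix (Fin d) (Fin d) ℂ))
    (hM : ∀ ρ ∈ M, ∀ p, (ρ p).PosSemidef)
    (β : ℝ) (hβ : 0 < β)
    (F : C × Z → ℝ) (hF : ∀ p, 0 ≤ F p)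
    (hqef : ∀ ρ ∈ M,
      ∑ p, F p * sandR (1 + β) (ρ p) (∑ c, ρ (c, p.2)) ≤ rtr (∑ p, ρ p))
    (γ : ℝ) (hγ0 : 0 < γ) (hγ1 : γ ≤ 1) :
    ∀ ρ ∈ M,
      ∑ p, (F p) ^ γ * sandR (1 + γ * β) (ρ p) (∑ c, ρ (c, p.2)) ≤ rtr (∑ p, ρ p) := by
  intro ρ hρ
  rcases hγ1.eq_or_lt with rfl | hγ1
  · simpa using hqef ρ hρ
  have hσ : ∀ z, (∑ c, ρ (c, z)).PosSemidef := fun z =>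
    Matrix.posSemidef_sum _ fun c _ => hM ρ hρ _
  have hT : rtr (∑ p, ρ p) = ∑ p, rtr (ρ p) := by
    simp [rtr, Matrix.trace_sum, Complex.re_sum]
  have hTn : ∀ p, 0 ≤ rtr (ρ p) := fun p =>
    (Complex.le_def.1 (hM ρ hρ p).trace_nonneg).1
  have hRn : ∀ p : C × Z, 0 ≤ sandR (1 + β) (ρ p) (∑ c, ρ (c, p.2)) := fun p =>
    sandR_nonneg _ _ (hM ρ hρ p) (hσ _) _ (by linarith)
  have hq := hqef ρ hρ
  rw [hT] at hq ⊢
  have hTs : 0 ≤ ∑ p, rtr (ρ p) := Finset.sum_nonneg fun p _ => hTn p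
  have hFs : 0 ≤ ∑ p, F p * sandR (1 + β) (ρ p) (∑ c, ρ (c, p.2)) :=
    Finset.sum_nonneg fun p _ => mul_nonneg (hF p) (hRn p)
  calc ∑ p, (F p) ^ γ * sandR (1 + γ * β) (ρ p) (∑ c, ρ (c, p.2))
      ≤ ∑ p, rtr (ρ p) ^ (1 - γ) *
          (F p * sandR (1 + β) (ρ p) (∑ c, ρ (c, p.2))) ^ γ := by
        refine Finset.sum_le_sum fun p _ => ?_
        rw [Real.mul_rpow (hF p) (hRn p)]
        have := mul_le_mul_of_nonneg_left (sandR_interp _ _ (hM ρ hρ p) (hσ p.2) β γ hβ hγ0 hγ1)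
          (Real.rpow_nonneg (hF p) γ)
        linarith
    _ ≤ (∑ p, rtr (ρ p)) ^ (1 - γ) *
          (∑ p, F p * sandR (1 + β) (ρ p) (∑ c, ρ (c, p.2))) ^ γ :=
        holder_aux Finset.univ _ _ hTn (fun p => mul_nonneg (hF p) (hRn p)) γ hγ0 hγ1
    _ ≤ (∑ p, rtr (ρ p)) ^ (1 - γ) * (∑ p, rtr (ρ p)) ^ γ := by
        gcongr
    _ = ∑ p, rtr (ρ p) := by
        rw [← Real.rpow_add_of_nonneg hTs (by linarith) hγ0.le]
        simp
end
end
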